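/- Let F be an arbitrary field and n ≥ 3 odd. Then the length of the group algebra F D_n of the dihedral group of order 2n equals n; precisely, every generating set S of F D_n satisfies l(S) ≤ n, and there exists a generating set with l(S) = n. -/

import Mathlib

/-- `Lk F S k` is the `F`-linear span of all products of at most `k` elements of `S`
(the empty product `1` has length `0`); equivalently `V ^ k` with `V = span F ({1} ∪ S)`. -/
noncomputable def Lk (F : Type*) [Field F] {A : Type*} [Ring A] [Algebra F A]
    (S : Set A) (k : ℕ) : Submodule F A :=
  (Submodule.span F ({1} ∪ S)) ^ k

/-- The length of a generating set `S`: the least `k` with `Lk F S k = ⊤`. -/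
noncomputable def lenS (F : Type*) [Field F] {A : Type*} [Ring A] [Algebra F A]
    (S : Set A) : ℕ :=
  sInf {k | Lk F S k = ⊤}

/-- `mAlg F A` is the maximal degree over all `τ ∈ A` of the minimal polynomial of `τ`. -/
noncomputable def mAlg (F A : Type*) [Field F] [Ring A] [Algebra F A] : ℕ :=
  sSup {d | ∃ τ : A, d = (minpoly F τ).natDegree}

/-!
Put `V = span ({1} ∪ S)`, so that `Lk F S k = V ^ k`, and let `A` be the group algebra, of
dimension `2n`.

**Upper bound.** Suppose `V ^ n ≠ ⊤`. Then `V ^ 0 < V ^ 1 < ⋯ < V ^ (n + 1)`, and since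
`dim A < 2n + 1` some step `V ^ k < V ^ (k + 1)` with `k < n` raises the dimension by exactly one.
The `(k + 1)`-st component of the associated graded algebra is then a line, and it is spanned by
the class of `v ^ (k + 1)` for a suitable `v ∈ V`: if multiplication by `v` does not kill this
line, the factors of a nonzero product can be replaced one by one by `v`. All later components
are spanned by powers of `v` too. But `v ^ (n + 1) ∈ V ^ n` because the minimal polynomial of `v`
has degree at most `n + 1`, so `V ^ (n + 1) = V ^ n`, a contradiction.

**Minimal polynomials.** A polynomial annihilating `φ x` times one annihilating left multiplication
by `x` on `ker φ` annihilates `x`. We apply this to the representation `φ` of `A` on the `n`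
vertices of the `n`-gon. As `n` is odd, every pair of a rotation and a reflection agrees at exactly
one vertex, which makes the matrix entries of `φ x` the sums of a coefficient of `x` at a rotation
and one at a reflection, and all such sums occur. Hence `dim ker φ ≤ 1`, in every characteristic.

**Lower bound.** `A` is generated by two reflections `a` and `b`. Since `a² = b² = 1`, only the two
alternating words of length `k + 1` can be new in `V ^ (k + 1)`, so `dim V ^ k ≤ 2k + 1`.
-/

section PowersOfSubmodules

lemma pow_le_pow_of_pow_succ_le {M : Type*} [Monoid M] [Preorder M] [MulRightMono M] {a : M}
    {k j : ℕ} (h : a ^ (k + 1) ≤ a ^ k) (hkj : k ≤ j) : a ^ j ≤ a ^ k := by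
  induction j, hkj using Nat.le_induction with
  | base => rfl
  | succ j _ ih =>
    calc a ^ (j + 1) = a ^ j * a := pow_succ a j
      _ ≤ a ^ k * a := by gcongr
      _ = a ^ (k + 1) := (pow_succ a k).symm
      _ ≤ a ^ k := h

lemma pow_succ_le_pow_add_pow_succ {R : Type*} [IdemSemiring R] {a b : R} (hba : b ≤ a) {k j : ℕ}
    (h : a ^ (k + 1) ≤ a ^ k + b ^ (k + 1)) (hkj : k ≤ j) :
    a ^ (j + 1) ≤ a ^ j + b ^ (j + 1) := by
  induction j, hkj using Nat.le_induction with
  | base => exact h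
  | succ j _ ih =>
    calc a ^ (j + 2) = a * a ^ (j + 1) := pow_succ' a (j + 1)
      _ ≤ a * (a ^ j + b ^ (j + 1)) := by gcongr
      _ = a ^ (j + 1) + a * b ^ j * b := by rw [mul_add, ← pow_succ', pow_succ b, mul_assoc]
      _ ≤ a ^ (j + 1) + a * a ^ j * b := by gcongr
      _ = a ^ (j + 1) + a ^ (j + 1) * b := by rw [pow_succ' a]
      _ ≤ a ^ (j + 1) + (a ^ j + b ^ (j + 1)) * b := by gcongr
      _ = a ^ (j + 1) + (a ^ j * b + b ^ (j + 2)) := by rw [add_mul, ← pow_succ b]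
      _ ≤ a ^ (j + 1) + (a ^ j * a + b ^ (j + 2)) := by gcongr
      _ = a ^ (j + 1) + b ^ (j + 2) := by rw [← pow_succ, ← add_assoc, add_idem]

lemma le_sup_span_singleton_of_finrank_le {F E : Type*} [Field F] [AddCommGroup E] [Module F E]
    [FiniteDimensional F E] {P Q : Submodule F E} (hPQ : P ≤ Q)
    (hd : Module.finrank F Q ≤ Module.finrank F P + 1) {x : E} (hx : x ∈ Q) (hxP : x ∉ P) :
    Q ≤ P ⊔ Submodule.span F {x} := by
  have hle : P ⊔ Submodule.span F {x} ≤ Q :=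
    sup_le hPQ ((Submodule.span_singleton_le_iff_mem x Q).2 hx)
  have hlt : P < P ⊔ Submodule.span F {x} :=
    left_lt_sup.2 fun h => hxP ((Submodule.span_singleton_le_iff_mem x P).1 h)
  have := Submodule.finrank_lt_finrank_of_lt hlt
  exact (Submodule.eq_of_le_of_finrank_le hle (by omega)).ge

variable {F A : Type*} [Field F] [Ring A] [Algebra F A] {V : Submodule F A}

lemma pow_eq_top_of_pow_succ_le (hV : 1 ≤ V) (hgen : Algebra.adjoin F (V : Set A) = ⊤) {k : ℕ}
    (hk : V ^ (k + 1) ≤ V ^ k) : V ^ k = ⊤ := by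
  have hmul : V ^ k * V ^ k ≤ V ^ k := by
    rw [← pow_add]
    exact pow_le_pow_of_pow_succ_le hk (Nat.le_add_right k k)
  let B : Subalgebra F A := (V ^ k).toSubalgebra (Submodule.one_le.1 (one_le_pow₀ hV))
    fun x y hx hy => hmul (Submodule.mul_mem_mul hx hy)
  have hVB : V ≤ V ^ k := (le_self_pow₀ hV k.succ_ne_zero).trans hk
  have hB : B = ⊤ := top_le_iff.1 (hgen ▸ Algebra.adjoin_le hVB)
  exact eq_top_iff.2 fun x _ => (hB ▸ Algebra.mem_top : x ∈ B)

lemma pow_succ_mem_pow_of_natDegree_minpoly_le (hV : 1 ≤ V) {v : A} (hv : v ∈ V)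
    (hint : IsIntegral F v) {m : ℕ} (hdeg : (minpoly F v).natDegree ≤ m + 1) :
    v ^ (m + 1) ∈ V ^ m := by
  refine Submodule.span_le.2 ?_ (hint.mem_span_pow ⟨Polynomial.X ^ (m + 1), by simp⟩)
  rintro _ ⟨i, rfl⟩
  exact pow_le_pow_right₀ hV (by omega) (Submodule.pow_mem_pow V hv i)

lemma two_mul_add_one_le_finrank_pow [Nontrivial A] {n : ℕ}
    (h : ∀ k < n, Module.finrank F ↥(V ^ k) + 2 ≤ Module.finrank F ↥(V ^ (k + 1))) :
    2 * n + 1 ≤ Module.finrank F ↥(V ^ n) := by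
  induction n with
  | zero => rw [pow_zero, Submodule.one_eq_span, finrank_span_singleton one_ne_zero]
  | succ n ih =>
    have := ih fun k hk => h k (by omega)
    have := h n n.lt_succ_self
    omega

variable [FiniteDimensional F A]

lemma exists_forall_mul_notMem_pow (hV : 1 ≤ V) {k : ℕ}
    (hd : Module.finrank F ↥(V ^ (k + 1)) ≤ Module.finrank F ↥(V ^ k) + 1)
    (hns : ¬V ^ (k + 2) ≤ V ^ (k + 1)) :
    ∃ v ∈ V, ∀ z ∈ V ^ (k + 1), z ∉ V ^ k → v * z ∉ V ^ (k + 1) := by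
  rw [pow_succ', Submodule.mul_le] at hns
  push Not at hns
  obtain ⟨v, hv, y, hy, hvy⟩ := hns
  refine ⟨v, hv, fun z hz hzk hvz => hvy ?_⟩
  obtain ⟨l, hl, c, rfl⟩ : ∃ l ∈ V ^ k, ∃ c : F, l + c • z = y := by
    simpa only [Submodule.mem_sup, Submodule.mem_span_singleton, exists_exists_eq_and] using
      le_sup_span_singleton_of_finrank_le (pow_le_pow_right₀ hV k.le_succ) hd hz hzk hy
  rw [mul_add, mul_smul_comm]
  refine add_mem ?_ (Submodule.smul_mem _ c hvz)
  rw [pow_succ']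
  exact Submodule.mul_mem_mul hv hl

lemma exists_pow_succ_notMem_pow (hV : 1 ≤ V) {k : ℕ}
    (hd : Module.finrank F ↥(V ^ (k + 1)) ≤ Module.finrank F ↥(V ^ k) + 1)
    (hns : ¬V ^ (k + 2) ≤ V ^ (k + 1)) : ∃ v ∈ V, v ^ (k + 1) ∉ V ^ k := by
  obtain ⟨v, hv, hmul⟩ := exists_forall_mul_notMem_pow hV hd hns
  have trade : ∀ i m, i + m = k + 1 → ∃ p ∈ V ^ m, v ^ i * p ∉ V ^ k := by
    intro i
    induction i with
    | zero =>
      intro m hm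
      obtain rfl : m = k + 1 := by omega
      simpa using SetLike.not_le_iff_exists.1
        fun h => hns (pow_le_pow_of_pow_succ_le h (by omega) |>.trans
          (pow_le_pow_right₀ hV k.le_succ))
    | succ i ih =>
      intro m hm
      obtain ⟨p, hp, hpk⟩ := ih (m + 1) (by omega)
      have hmem : v ^ i * p ∈ V ^ (k + 1) := by
        rw [show k + 1 = i + (m + 1) by omega, pow_add]
        exact Submodule.mul_mem_mul (Submodule.pow_mem_pow V hv i) hp
      have hnotMem : ¬V ^ m * V ≤ (V ^ (k + 1)).comap (LinearMap.mulLeft F (v ^ (i + 1))) :=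
        fun h => hmul _ hmem hpk (by simpa [pow_succ', mul_assoc] using h (pow_succ V m ▸ hp))
      rw [Submodule.mul_le] at hnotMem
      push Not at hnotMem
      obtain ⟨q, hq, t, ht, hqt⟩ := hnotMem
      refine ⟨q, hq, fun h => hqt ?_⟩
      rw [Submodule.mem_comap, LinearMap.mulLeft_apply, ← mul_assoc, pow_succ]
      exact Submodule.mul_mem_mul h ht
  obtain ⟨p, hp, hpk⟩ := trade (k + 1) 0 rfl
  obtain ⟨c, rfl⟩ := Submodule.mem_one.1 (pow_zero V ▸ hp)
  refine ⟨v, hv, fun h => hpk ?_⟩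
  rw [← Algebra.commutes, ← Algebra.smul_def]
  exact Submodule.smul_mem _ c h

lemma pow_eq_top_of_finrank_le_of_natDegree_minpoly_le (hV : 1 ≤ V)
    (hgen : Algebra.adjoin F (V : Set A) = ⊤) {n : ℕ} (hdim : Module.finrank F A ≤ 2 * n)
    (hdeg : ∀ x : A, (minpoly F x).natDegree ≤ n + 1) : V ^ n = ⊤ := by
  nontriviality A
  by_contra hne
  have hns : ∀ k ≤ n, ¬V ^ (k + 1) ≤ V ^ k := fun k hk h => hne <| top_le_iff.1 <|
    pow_eq_top_of_pow_succ_le hV hgen h ▸ pow_le_pow_right₀ hV hk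
  obtain ⟨k, hk, hd⟩ : ∃ k < n,
      Module.finrank F ↥(V ^ (k + 1)) ≤ Module.finrank F ↥(V ^ k) + 1 := by
    by_contra! hjump
    have := two_mul_add_one_le_finrank_pow hjump
    have := Submodule.finrank_le (V ^ n)
    omega
  obtain ⟨v, hv, hvk⟩ := exists_pow_succ_notMem_pow hV hd (hns (k + 1) hk)
  have hvV : Submodule.span F {v} ≤ V := (Submodule.span_singleton_le_iff_mem v V).2 hv
  have hspan (j : ℕ) : Submodule.span F {v} ^ j = Submodule.span F {v ^ j} := by
    rw [Submodule.span_pow, Set.singleton_pow]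
  have hstep : V ^ (k + 1) ≤ V ^ k + Submodule.span F {v} ^ (k + 1) := by
    rw [hspan]
    exact le_sup_span_singleton_of_finrank_le (pow_le_pow_right₀ hV k.le_succ) hd
      (Submodule.pow_mem_pow V hv _) hvk
  refine hns n le_rfl ((pow_succ_le_pow_add_pow_succ hvV hstep hk.le).trans (sup_le le_rfl ?_))
  rw [hspan, Submodule.span_singleton_le_iff_mem]
  exact pow_succ_mem_pow_of_natDegree_minpoly_le hV hv (Algebra.IsIntegral.isIntegral v) (hdeg v)

end PowersOfSubmodules

section Length

variable {F A : Type*} [Field F] [Ring A] [Algebra F A]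

lemma lenS_le_of_Lk_eq_top {S : Set A} {n : ℕ} (h : Lk F S n = ⊤) : lenS F S ≤ n :=
  Nat.sInf_le h

lemma one_le_span_one_union (S : Set A) : 1 ≤ Submodule.span F ({1} ∪ S) :=
  Submodule.one_le.2 (Submodule.subset_span (Or.inl rfl))

lemma one_mem_Lk (S : Set A) (k : ℕ) : 1 ∈ Lk F S k :=
  Submodule.one_le.1 (one_le_pow₀ (one_le_span_one_union S))

lemma Lk_eq_top_of_finrank_le_of_natDegree_minpoly_le [FiniteDimensional F A] {S : Set A}
    (hS : Algebra.adjoin F S = ⊤) {n : ℕ} (hdim : Module.finrank F A ≤ 2 * n)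
    (hdeg : ∀ x : A, (minpoly F x).natDegree ≤ n + 1) : Lk F S n = ⊤ := by
  refine pow_eq_top_of_finrank_le_of_natDegree_minpoly_le (V := Submodule.span F ({1} ∪ S))
    (one_le_span_one_union S) ?_ hdim hdeg
  rw [Algebra.adjoin_span, Set.singleton_union, Algebra.adjoin_insert_one, hS]

lemma Lk_lenS_eq_top [FiniteDimensional F A] {S : Set A} (hS : Algebra.adjoin F S = ⊤) :
    Lk F S (lenS F S) = ⊤ :=
  Nat.sInf_mem (s := {k | Lk F S k = ⊤}) ⟨Module.finrank F A,
    Lk_eq_top_of_finrank_le_of_natDegree_minpoly_le hS (by omega)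
      fun x => (minpoly.natDegree_le x).trans (Nat.le_succ _)⟩

/-- The alternating word `a * b * a * ⋯` with `k` letters, the first of which is `a`. -/
def alternatingProd {M : Type*} [Monoid M] (a b : M) : ℕ → M
  | 0 => 1
  | k + 1 => a * alternatingProd b a k

lemma alternatingProd_mem_pow {V : Submodule F A} {a b : A} (ha : a ∈ V) (hb : b ∈ V) (k : ℕ) :
    alternatingProd a b k ∈ V ^ k := by
  induction k generalizing a b with
  | zero => exact Submodule.one_le.1 (pow_zero V).ge
  | succ k ih =>
    rw [pow_succ']
    exact Submodule.mul_mem_mul ha (ih hb ha)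

lemma mul_alternatingProd_succ_mem_pow {V : Submodule F A} {a b : A} (ha : a ∈ V) (hb : b ∈ V)
    (haa : a * a ∈ V) (k : ℕ) : a * alternatingProd a b (k + 1) ∈ V ^ (k + 1) := by
  rw [alternatingProd, ← mul_assoc, pow_succ']
  exact Submodule.mul_mem_mul haa (alternatingProd_mem_pow hb ha k)

lemma Lk_pair_succ_le {a b : A} (haa : a * a ∈ Lk F {a, b} 1) (hbb : b * b ∈ Lk F {a, b} 1)
    (k : ℕ) : Lk F {a, b} (k + 1) ≤ Lk F {a, b} k ⊔
      Submodule.span F {alternatingProd a b (k + 1), alternatingProd b a (k + 1)} := by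
  simp only [Lk, pow_one] at haa hbb ⊢
  set V := Submodule.span F ({1} ∪ {a, b}) with hV
  have ha : a ∈ V := Submodule.subset_span (by simp)
  have hb : b ∈ V := Submodule.subset_span (by simp)
  induction k with
  | zero =>
    rw [zero_add, pow_one, pow_zero, Submodule.one_eq_span, ← Submodule.span_union, hV]
    simp [alternatingProd]
  | succ k ih =>
    rw [pow_succ' V (k + 1)]
    refine (mul_le_mul_right ih V).trans ?_
    rw [Submodule.mul_sup, ← pow_succ']
    refine sup_le le_sup_left ?_
    rw [hV, Submodule.span_mul_span, ← hV, Submodule.span_le]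
    rintro _ ⟨x, hx, y, hy, rfl⟩
    rcases hx with rfl | rfl | rfl <;> rcases hy with rfl | rfl
    · simpa using Submodule.mem_sup_left (alternatingProd_mem_pow ha hb (k + 1))
    · simpa using Submodule.mem_sup_left (alternatingProd_mem_pow hb ha (k + 1))
    · exact Submodule.mem_sup_left (mul_alternatingProd_succ_mem_pow ha hb haa k)
    · exact Submodule.mem_sup_right (Submodule.subset_span (Or.inl rfl))
    · exact Submodule.mem_sup_right (Submodule.subset_span (Or.inr rfl))
    · exact Submodule.mem_sup_left (mul_alternatingProd_succ_mem_pow hb ha hbb k)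

lemma finrank_Lk_pair_le {a b : A} (haa : a * a ∈ Lk F {a, b} 1) (hbb : b * b ∈ Lk F {a, b} 1)
    (k : ℕ) : Module.finrank F ↥(Lk F {a, b} k) ≤ 2 * k + 1 := by
  have hfin (j : ℕ) : FiniteDimensional F ↥(Lk F {a, b} j) :=
    Module.Finite.of_fg ((Submodule.fg_span (Set.toFinite _)).pow j)
  induction k with
  | zero =>
    rw [Lk, pow_zero, Submodule.one_eq_span]
    simpa using finrank_span_le_card (R := F) ({1} : Set A)
  | succ k ih =>
    have hspan : Module.finrank F ↥(Submodule.span F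
        {alternatingProd a b (k + 1), alternatingProd b a (k + 1)}) ≤ 2 := by
      classical
      rw [← Finset.coe_pair]
      exact (finrank_span_finset_le_card _).trans Finset.card_le_two
    have := FiniteDimensional.span_of_finite F (Set.toFinite
      {alternatingProd a b (k + 1), alternatingProd b a (k + 1)})
    have := (Submodule.finrank_mono (Lk_pair_succ_le haa hbb k)).trans
      (Submodule.finrank_add_le_finrank_add_finrank _ _)
    omega

lemma finrank_le_two_mul_lenS_pair_add_one [FiniteDimensional F A] {a b : A}
    (hab : Algebra.adjoin F {a, b} = ⊤) (haa : a * a ∈ Lk F {a, b} 1)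
    (hbb : b * b ∈ Lk F {a, b} 1) : Module.finrank F A ≤ 2 * lenS F {a, b} + 1 := by
  have h := finrank_Lk_pair_le haa hbb (lenS F {a, b})
  rwa [Lk_lenS_eq_top hab, finrank_top] at h

lemma minpoly_dvd_mul_of_algHom {B : Type*} [Ring B] [Algebra F B] (φ : A →ₐ[F] B) (x : A) :
    minpoly F x ∣ minpoly F (Algebra.lsmul F F (RingHom.ker φ) x) * minpoly F (φ x) := by
  refine minpoly.dvd F x ?_
  have hker : Polynomial.aeval x (minpoly F (φ x)) ∈ RingHom.ker φ := by
    rw [RingHom.mem_ker, ← Polynomial.aeval_algHom_apply, minpoly.aeval]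
  have hann := minpoly.aeval F (Algebra.lsmul F F (RingHom.ker φ) x)
  rw [Polynomial.aeval_algHom_apply] at hann
  simpa using congrArg Subtype.val (LinearMap.congr_fun hann ⟨_, hker⟩)

lemma natDegree_minpoly_end_le_finrank {M : Type*} [AddCommGroup M] [Module F M]
    [FiniteDimensional F M] (f : Module.End F M) :
    (minpoly F f).natDegree ≤ Module.finrank F M := by
  rw [← LinearMap.charpoly_natDegree f]
  exact Polynomial.natDegree_le_of_dvd f.minpoly_dvd_charpoly f.charpoly_monic.ne_zero

lemma natDegree_minpoly_le_finrank_add_finrank_ker [FiniteDimensional F A] {M : Type*}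
    [AddCommGroup M] [Module F M] [FiniteDimensional F M] (φ : A →ₐ[F] Module.End F M) (x : A) :
    (minpoly F x).natDegree ≤ Module.finrank F M + Module.finrank F (RingHom.ker φ) := by
  have hφ : minpoly F (φ x) ≠ 0 := minpoly.ne_zero_of_finite F _
  have hker : minpoly F (Algebra.lsmul F F (RingHom.ker φ) x) ≠ 0 :=
    minpoly.ne_zero_of_finite F _
  calc (minpoly F x).natDegree
      ≤ (minpoly F (Algebra.lsmul F F (RingHom.ker φ) x) * minpoly F (φ x)).natDegree :=
        Polynomial.natDegree_le_of_dvd (minpoly_dvd_mul_of_algHom φ x) (mul_ne_zero hker hφ)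
    _ = (minpoly F (φ x)).natDegree +
          (minpoly F (Algebra.lsmul F F (RingHom.ker φ) x)).natDegree := by
        rw [Polynomial.natDegree_mul hker hφ, add_comm]
    _ ≤ Module.finrank F M + Module.finrank F (RingHom.ker φ) :=
        add_le_add (natDegree_minpoly_end_le_finrank _) (natDegree_minpoly_end_le_finrank _)

end Length

section DihedralGroup

lemma finrank_monoidAlgebra (F G : Type*) [Field F] :
    Module.finrank F (MonoidAlgebra F G) = Nat.card G :=
  Module.finrank_eq_nat_card_basis (MonoidAlgebra.basis G F)

lemma adjoin_image_of_eq_top (F : Type*) [Field F] {G : Type*} [Monoid G] {T : Set G}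
    (hT : Submonoid.closure T = ⊤) : Algebra.adjoin F (MonoidAlgebra.of F G '' T) = ⊤ := by
  set B := Algebra.adjoin F (MonoidAlgebra.of F G '' T)
  have hof : Submonoid.closure T ≤ B.toSubmonoid.comap (MonoidAlgebra.of F G) :=
    Submonoid.closure_le.2 fun g hg => Algebra.subset_adjoin ⟨g, hg, rfl⟩
  refine eq_top_iff.2 fun x _ => Algebra.adjoin_le ?_ (MonoidAlgebra.mem_adjoin_support x)
  rintro _ ⟨g, -, rfl⟩
  exact hof (hT ▸ Submonoid.mem_top g)

lemma closure_sr_zero_sr_one (n : ℕ) :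
    Submonoid.closure {DihedralGroup.sr 0, DihedralGroup.sr (1 : ZMod n)} = ⊤ := by
  set H := Submonoid.closure {DihedralGroup.sr 0, DihedralGroup.sr (1 : ZMod n)}
  have h0 : DihedralGroup.sr 0 ∈ H := Submonoid.subset_closure (by simp)
  have h1 : DihedralGroup.sr 1 ∈ H := Submonoid.subset_closure (by simp)
  have hr (i : ZMod n) : DihedralGroup.r i ∈ H := by
    obtain ⟨z, rfl⟩ := ZMod.intCast_surjective i
    obtain ⟨m, rfl | rfl⟩ := z.eq_nat_or_neg
    · simpa using pow_mem (mul_mem h0 h1) m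
    · simpa using pow_mem (mul_mem h1 h0) m
  refine eq_top_iff.2 ?_
  rintro (i | i) -
  · exact hr i
  · simpa using mul_mem h0 (hr i)

variable (F : Type*) [Field F] (n : ℕ)

lemma adjoin_of_sr_zero_of_sr_one :
    Algebra.adjoin F {MonoidAlgebra.of F (DihedralGroup n) (DihedralGroup.sr 0),
      MonoidAlgebra.of F (DihedralGroup n) (DihedralGroup.sr 1)} = ⊤ := by
  rw [← Set.image_pair]
  exact adjoin_image_of_eq_top F (closure_sr_zero_sr_one n)

variable {n} in
lemma of_sr_mul_self (i : ZMod n) :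
    MonoidAlgebra.of F (DihedralGroup n) (DihedralGroup.sr i) *
      MonoidAlgebra.of F (DihedralGroup n) (DihedralGroup.sr i) = 1 := by
  rw [← map_mul, DihedralGroup.sr_mul_self, map_one]

/-- The action of the dihedral group on the vertices of the regular `n`-gon, labelled by `ZMod n`.
The group law of `DihedralGroup` forces `sr i` to be the rotation `r i` followed by `sr 0`. -/
abbrev dihedralMulAction : MulAction (DihedralGroup n) (ZMod n) where
  smul
    | .r i, x => x + i
    | .sr i, x => -(x + i)
  one_smul := add_zero
  mul_smul := by
    rintro (i | i) (j | j) x <;> simp [HSMul.hSMul] <;> ring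

attribute [local instance] dihedralMulAction

lemma r_smul (i x : ZMod n) : DihedralGroup.r i • x = x + i := rfl

lemma sr_smul (i x : ZMod n) : DihedralGroup.sr i • x = -(x + i) := rfl

/-- The permutation representation of the dihedral group on the free vector space on the vertices
of the `n`-gon, extended to the group algebra. -/
noncomputable abbrev dihedralPermAlgHom :
    MonoidAlgebra F (DihedralGroup n) →ₐ[F] Module.End F (MonoidAlgebra F (ZMod n)) :=
  (Representation.ofMulAction F (DihedralGroup n) (ZMod n)).asAlgebraHom

variable {F n}

lemma coeff_dihedralPermAlgHom_single (y : MonoidAlgebra F (DihedralGroup n)) (j k : ZMod n) :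
    (dihedralPermAlgHom F n y (MonoidAlgebra.single j 1)).coeff k =
      y.coeff (DihedralGroup.r (k - j)) + y.coeff (DihedralGroup.sr (-k - j)) := by
  induction y using MonoidAlgebra.induction_linear with
  | zero => simp
  | add f g hf hg =>
    simp only [map_add, LinearMap.add_apply, MonoidAlgebra.coeff_add, Finsupp.add_apply, hf, hg]
    ring
  | single g c =>
    rcases g with i | i
    · have : j + i = k ↔ i = k - j := by grind
      simp [Finsupp.single_apply, r_smul, this]
    · have : -(j + i) = k ↔ i = -k - j := by grind
      simp [-neg_add_rev, Finsupp.single_apply, sr_smul, this]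

lemma coeff_r_add_coeff_sr_of_mem_ker (hodd : Odd n) {y : MonoidAlgebra F (DihedralGroup n)}
    (hy : y ∈ RingHom.ker (dihedralPermAlgHom F n)) (u v : ZMod n) :
    y.coeff (DihedralGroup.r u) + y.coeff (DihedralGroup.sr v) = 0 := by
  obtain ⟨h, h2⟩ : ∃ h : ZMod n, 2 * h = 1 := by
    exact_mod_cast ((ZMod.isUnit_iff_coprime 2 n).2 hodd.coprime_two_left).exists_right_inv
  have hmatrix := coeff_dihedralPermAlgHom_single y (-h * (u + v)) (h * (u - v))
  have hu : h * (u - v) - -h * (u + v) = u := by linear_combination u * h2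
  have hv : -(h * (u - v)) - -h * (u + v) = v := by linear_combination v * h2
  rw [RingHom.mem_ker.1 hy, hu, hv] at hmatrix
  exact hmatrix.symm

lemma finrank_ker_dihedralPermAlgHom_le_one (hodd : Odd n) :
    Module.finrank F (RingHom.ker (dihedralPermAlgHom F n)) ≤ 1 := by
  let c : RingHom.ker (dihedralPermAlgHom F n) →ₗ[F] F :=
    Finsupp.lapply (DihedralGroup.r 0) ∘ₗ (MonoidAlgebra.coeffLinearEquiv F).toLinearMap ∘ₗ
      ((RingHom.ker (dihedralPermAlgHom F n)).restrictScalars F).subtype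
  have hc : Function.Injective c := by
    refine (injective_iff_map_eq_zero c).2 fun ⟨y, hy⟩ hcy => ?_
    have hr0 : y.coeff (DihedralGroup.r 0) = 0 := hcy
    have hsum := coeff_r_add_coeff_sr_of_mem_ker hodd hy
    have hsr (v : ZMod n) : y.coeff (DihedralGroup.sr v) = 0 := by
      simpa only [hr0, zero_add] using hsum 0 v
    have hr (u : ZMod n) : y.coeff (DihedralGroup.r u) = 0 := by
      simpa only [hsr, add_zero] using hsum u 0
    ext (i | i)
    · exact hr i
    · exact hsr i
  exact (LinearMap.finrank_le_finrank_of_injective hc).trans (Module.finrank_self F).le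

lemma natDegree_minpoly_monoidAlgebra_dihedralGroup_le (hodd : Odd n)
    (x : MonoidAlgebra F (DihedralGroup n)) : (minpoly F x).natDegree ≤ n + 1 := by
  have : NeZero n := ⟨hodd.pos.ne'⟩
  calc (minpoly F x).natDegree
      ≤ Module.finrank F (MonoidAlgebra F (ZMod n)) +
          Module.finrank F (RingHom.ker (dihedralPermAlgHom F n)) :=
        natDegree_minpoly_le_finrank_add_finrank_ker (dihedralPermAlgHom F n) x
    _ ≤ n + 1 := by
        rw [finrank_monoidAlgebra, Nat.card_zmod]
        exact Nat.add_le_add_left (finrank_ker_dihedralPermAlgHom_le_one hodd) n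

end DihedralGroup

theorem stmt_12 (F : Type*) [Field F] (n : ℕ) (hn : 3 ≤ n) (hodd : Odd n) :
    (∀ S : Set (MonoidAlgebra F (DihedralGroup n)),
        Algebra.adjoin F S = ⊤ → lenS F S ≤ n) ∧
    ∃ S : Set (MonoidAlgebra F (DihedralGroup n)),
        Algebra.adjoin F S = ⊤ ∧ lenS F S = n := by
  have : NeZero n := ⟨by omega⟩
  have hdim : Module.finrank F (MonoidAlgebra F (DihedralGroup n)) = 2 * n := by
    rw [finrank_monoidAlgebra, DihedralGroup.nat_card]
  have hupper (S : Set (MonoidAlgebra F (DihedralGroup n))) (hS : Algebra.adjoin F S = ⊤) :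
      lenS F S ≤ n :=
    lenS_le_of_Lk_eq_top <| Lk_eq_top_of_finrank_le_of_natDegree_minpoly_le hS hdim.le
      (natDegree_minpoly_monoidAlgebra_dihedralGroup_le hodd)
  have hgen := adjoin_of_sr_zero_of_sr_one F n
  have hlower := finrank_le_two_mul_lenS_pair_add_one hgen
    (by rw [of_sr_mul_self]; exact one_mem_Lk _ 1) (by rw [of_sr_mul_self]; exact one_mem_Lk _ 1)
  exact ⟨hupper, _, hgen, le_antisymm (hupper _ hgen) (by omega)⟩
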